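/- (Semantic cut-admissibility) Let P and Q be cut-free named GS4 derivations with conclusions ⊢Γ,A and ⊢Γ,Ā respectively, where all elements of the context Γ are atomic named formulas. Then the composite bl-graph ⟨⟨P⟩⟩ ⊙_A ⟨⟨Q⟩⟩ has at least one edge. -/

import Mathlib

open scoped Classical

noncomputable section

namespace GS4

/-- Named classical propositional formulas over atoms `α`, with names in `ℕ`. -/
inductive NForm (α : Type) : Type
  | atom : ℕ → α → NForm α
  | or   : NForm α → NForm α → NForm α
  | and  : NForm α → NForm α → NForm α

variable {α : Type}

/-- Name-preserving De Morgan negation, w.r.t. an involution `bar` on atoms. -/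
def negF (bar : α → α) : NForm α → NForm α
  | .atom x a => .atom x (bar a)
  | .or A B => .and (negF bar A) (negF bar B)
  | .and A B => .or (negF bar A) (negF bar B)

/-- The set of names occurring in a named formula. -/
def NForm.names : NForm α → Set ℕ
  | .atom x _ => {x}
  | .or A B => A.names ∪ B.names
  | .and A B => A.names ∪ B.names

/-- A named formula is sharing-free if every name occurs at most once in it. -/
def NForm.sharingFree : NForm α → Prop
  | .atom _ _ => True
  | .or A B => A.sharingFree ∧ B.sharingFree ∧ Disjoint A.names B.names
  | .and A B => A.sharingFree ∧ B.sharingFree ∧ Disjoint A.names B.names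

def NForm.isAtom : NForm α → Prop
  | .atom _ _ => True
  | _ => False

/-- Anonymous formulas (shapes): `A ≡ B` iff their shapes coincide. -/
inductive Shape (α : Type) : Type
  | atom : α → Shape α
  | or   : Shape α → Shape α → Shape α
  | and  : Shape α → Shape α → Shape α

def NForm.shape : NForm α → Shape α
  | .atom _ a => .atom a
  | .or A B => .or A.shape B.shape
  | .and A B => .and A.shape B.shape

/-- `HasAtom A x a`: the atomic formula `x:a` occurs in `A`. -/
def HasAtom : NForm α → ℕ → α → Prop
  | .atom y b, x, a => y = x ∧ b = a
  | .or A B, x, a => HasAtom A x a ∨ HasAtom B x a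
  | .and A B, x, a => HasAtom A x a ∨ HasAtom B x a

/-- Names of a finite set of named formulas. -/
def snames (Γ : Finset (NForm α)) : Set ℕ := ⋃ A ∈ Γ, A.names

/-- A finite set of named formulas is sharing-free if all its elements are
sharing-free with pairwise disjoint name sets. -/
def SFSet (Γ : Finset (NForm α)) : Prop :=
  (∀ A ∈ Γ, A.sharingFree) ∧
  ∀ A ∈ Γ, ∀ B ∈ Γ, A ≠ B → Disjoint A.names B.names

/-- `x:a` occurs in some formula of `Γ` (i.e. `Γ[x] = a` for sharing-free `Γ`). -/
def HasAtomS (Γ : Finset (NForm α)) (x : ℕ) (a : α) : Prop :=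
  ∃ A ∈ Γ, HasAtom A x a

/-- Branch sets of named formulas. -/
def BrF : NForm α → Set (Set ℕ)
  | .atom x _ => {{x}}
  | .or A B => {X | ∃ Y ∈ BrF A, ∃ Z ∈ BrF B, X = Y ∪ Z}
  | .and A B => BrF A ∪ BrF B

/-- Branch sets of sequents (finite sharing-free sets of named formulas). -/
def BrS (Γ : Finset (NForm α)) : Set (Set ℕ) :=
  {X | X ⊆ snames Γ ∧ ∀ A ∈ Γ, X ∩ A.names ∈ BrF A}

/-! ## Branch-labeled name graphs -/

/-- A branch-labeled name graph: vertices and a relation between unordered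
pairs of vertices and branch labels. -/
structure BLGraph : Type where
  verts : Set ℕ
  rel : Sym2 ℕ → Set ℕ → Prop

/-- Well-formedness of a bl-graph: related pairs consist of distinct vertices,
labels are sets of vertices, and each edge is included in its labels. -/
def BLGraph.IsBL (G : BLGraph) : Prop :=
  ∀ e X, G.rel e X → ¬ e.IsDiag ∧ X ⊆ G.verts ∧ ∀ v ∈ e, v ∈ X

def BLGraph.Edges (G : BLGraph) : Set (Sym2 ℕ) := {e | ∃ X, G.rel e X}

def BLGraph.Br (G : BLGraph) : Set (Set ℕ) := {X | ∃ e, G.rel e X}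

def BLGraph.union (G H : BLGraph) : BLGraph :=
  ⟨G.verts ∪ H.verts, fun e X => G.rel e X ∨ H.rel e X⟩

/-- Restriction `G↾_S` of a bl-graph. -/
def BLGraph.restrict (G : BLGraph) (S : Set ℕ) : BLGraph :=
  ⟨G.verts ∩ S, fun e X => G.rel e X ∧ X ⊆ S⟩

/-- The interface-relativized edge-branch relation `e ⊰^I_G X`. -/
def BLGraph.relI (G : BLGraph) (I : Set ℕ) (e : Sym2 ℕ) (X : Set ℕ) : Prop :=
  ∃ Y, G.rel e Y ∧ X = Y \ I

/-- `z 0, …, z (n-1)` is an `X`-labeled alternating path between `G` and `H`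
through the interface `I`. -/
def AltPath (G H : BLGraph) (I X : Set ℕ) (n : ℕ) (z : ℕ → ℕ) : Prop :=
  1 < n ∧
  (∀ i < n, ∀ j < n, z i = z j → i = j) ∧
  (∀ i, 0 < i → i + 1 < n → z i ∈ I) ∧
  ((∀ i, i + 1 < n →
      (Even i → G.relI I s(z i, z (i + 1)) X) ∧ (¬ Even i → H.relI I s(z i, z (i + 1)) X)) ∨
   (∀ i, i + 1 < n →
      (Even i → H.relI I s(z i, z (i + 1)) X) ∧ (¬ Even i → G.relI I s(z i, z (i + 1)) X)))

/-- Composition of bl-graphs over an interface `I`. -/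
def BLGraph.comp (G H : BLGraph) (I : Set ℕ) : BLGraph :=
  ⟨(G.verts ∪ H.verts) \ I,
   fun e X => ∃ n z, AltPath G H I X n z ∧ z 0 ∉ I ∧ z (n - 1) ∉ I ∧
     e = s(z 0, z (n - 1))⟩

/-- The weakening operator on bl-graphs: add vertices `V` and extend every
branch label by a member of `Brs`. -/
def blwk (V : Set ℕ) (Brs : Set (Set ℕ)) (G : BLGraph) : BLGraph :=
  ⟨G.verts ∪ V, fun e X => ∃ Y Z, G.rel e Y ∧ Z ∈ Brs ∧ X = Y ∪ Z⟩

/-- The bl-identity graph `id_{A,C}` on a pair of dual formulas. -/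
def blid : NForm α → NForm α → BLGraph
  | .atom x _, .atom y _ => ⟨{x, y}, fun e X => e = s(x, y) ∧ X = {x, y}⟩
  | .or A1 A2, .and C1 C2 =>
      (blwk A2.names (BrF A2) (blid A1 C1)).union (blwk A1.names (BrF A1) (blid A2 C2))
  | .and A1 A2, .or C1 C2 =>
      (blwk C2.names (BrF C2) (blid A1 C1)).union (blwk C1.names (BrF C1) (blid A2 C2))
  | _, _ => ⟨∅, fun _ _ => False⟩

/-! ## Simple name graphs -/

/-- A simple name graph. -/
structure NGraph : Type where
  verts : Set ℕ
  edges : Set (Sym2 ℕ)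

/-- Subgraph relation `H ⊑ G`. -/
def NGraph.Sub (H G : NGraph) : Prop := H.verts ⊆ G.verts ∧ H.edges ⊆ G.edges

def NGraph.union (G H : NGraph) : NGraph := ⟨G.verts ∪ H.verts, G.edges ∪ H.edges⟩

/-- Induced subgraph `G↾_S`. -/
def NGraph.restrict (G : NGraph) (S : Set ℕ) : NGraph :=
  ⟨G.verts ∩ S, {e ∈ G.edges | ∀ v ∈ e, v ∈ S}⟩

/-- Alternating paths between simple name graphs through an interface. -/
def NAltPath (G H : NGraph) (I : Set ℕ) (n : ℕ) (z : ℕ → ℕ) : Prop :=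
  0 < n ∧
  (∀ i < n, ∀ j < n, z i = z j → i = j) ∧
  (∀ i, 0 < i → i + 1 < n → z i ∈ I) ∧
  ((∀ i, i + 1 < n →
      (Even i → s(z i, z (i + 1)) ∈ G.edges) ∧ (¬ Even i → s(z i, z (i + 1)) ∈ H.edges)) ∨
   (∀ i, i + 1 < n →
      (Even i → s(z i, z (i + 1)) ∈ H.edges) ∧ (¬ Even i → s(z i, z (i + 1)) ∈ G.edges)))

/-- Composition of simple name graphs over an interface. -/
def NGraph.comp (G H : NGraph) (I : Set ℕ) : NGraph :=
  ⟨(G.verts ∪ H.verts) \ I,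
   {e | ∃ x y, x ≠ y ∧ x ∈ (G.verts ∪ H.verts) \ I ∧ y ∈ (G.verts ∪ H.verts) \ I ∧
        e = s(x, y) ∧ ∃ n z, NAltPath G H I n z ∧ z 0 = x ∧ z (n - 1) = y}⟩

/-- The identity graph `Id_{A,C}` on a pair of dual formulas. -/
def idg : NForm α → NForm α → NGraph
  | .atom x _, .atom y _ => ⟨{x, y}, {s(x, y)}⟩
  | .or A1 A2, .and C1 C2 => (idg A1 C1).union (idg A2 C2)
  | .and A1 A2, .or C1 C2 => (idg A1 C1).union (idg A2 C2)
  | _, _ => ⟨∅, ∅⟩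

/-- The edgeless (weakening) graph on the names of `Γ`. -/
def wkg (Γ : Finset (NForm α)) : NGraph := ⟨snames Γ, ∅⟩

/-! ## Named GS4 derivations -/

/-- Named GS4 derivation trees. -/
inductive Deriv (α : Type) : Type
  | ax (Γ : Finset (NForm α)) (A C : NForm α)
  | cut (A : NForm α) (P Q : Deriv α)
  | sup (P Q : Deriv α)
  | orI (A B : NForm α) (P : Deriv α)
  | andI (A B : NForm α) (P Q : Deriv α)

/-- Conclusion of a derivation tree. -/
def concl : Deriv α → Finset (NForm α)
  | .ax Γ A C => insert A (insert C Γ)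
  | .cut A P _ => (concl P).erase A
  | .sup P _ => concl P
  | .orI A B P => insert (NForm.or A B) (((concl P).erase A).erase B)
  | .andI A B P _ => insert (NForm.and A B) ((concl P).erase A)

/-- Well-formedness of derivation trees w.r.t. the atom involution `bar`:
each rule is applied correctly to sharing-free named sequents. -/
def WF (bar : α → α) : Deriv α → Prop
  | .ax Γ A C =>
      A.shape = (negF bar C).shape ∧
      A.sharingFree ∧ C.sharingFree ∧ SFSet Γ ∧
      Disjoint A.names C.names ∧
      Disjoint A.names (snames Γ) ∧ Disjoint C.names (snames Γ)
  | .cut A P Q =>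
      WF bar P ∧ WF bar Q ∧
      ∃ Γ : Finset (NForm α), A ∉ Γ ∧ negF bar A ∉ Γ ∧
        concl P = insert A Γ ∧ concl Q = insert (negF bar A) Γ ∧
        A.sharingFree ∧ SFSet Γ ∧ Disjoint A.names (snames Γ)
  | .sup P Q => WF bar P ∧ WF bar Q ∧ concl P = concl Q
  | .orI A B P =>
      WF bar P ∧
      ∃ Γ : Finset (NForm α), A ∉ Γ ∧ B ∉ Γ ∧ A ≠ B ∧
        concl P = insert A (insert B Γ) ∧
        A.sharingFree ∧ B.sharingFree ∧ SFSet Γ ∧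
        Disjoint A.names B.names ∧
        Disjoint A.names (snames Γ) ∧ Disjoint B.names (snames Γ)
  | .andI A B P Q =>
      WF bar P ∧ WF bar Q ∧
      ∃ Γ : Finset (NForm α), A ∉ Γ ∧ B ∉ Γ ∧
        concl P = insert A Γ ∧ concl Q = insert B Γ ∧
        A.sharingFree ∧ B.sharingFree ∧ SFSet Γ ∧
        Disjoint A.names B.names ∧
        Disjoint A.names (snames Γ) ∧ Disjoint B.names (snames Γ)

/-- A derivation is cut-free if it contains no cut rule. -/
def CutFree : Deriv α → Prop
  | .ax _ _ _ => True
  | .cut _ _ _ => False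
  | .sup P Q => CutFree P ∧ CutFree Q
  | .orI _ _ P => CutFree P
  | .andI _ _ P Q => CutFree P ∧ CutFree Q

/-- The branch-labeled axiom graph `⟨⟨P⟩⟩` of a derivation. -/
def blaxg : Deriv α → BLGraph
  | .ax Γ A C => blwk (snames Γ) (BrS Γ) (blid A C)
  | .cut A P Q => BLGraph.comp (blaxg P) (blaxg Q) A.names
  | .sup P Q => (blaxg P).union (blaxg Q)
  | .orI _ _ P => blaxg P
  | .andI _ _ P Q => (blaxg P).union (blaxg Q)

/-- The (simple) axiom graph `⟦P⟧` of a derivation. -/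
def axg : Deriv α → NGraph
  | .ax Γ A C => (wkg Γ).union (idg A C)
  | .cut A P Q => NGraph.comp (axg P) (axg Q) A.names
  | .sup P Q => (axg P).union (axg Q)
  | .orI _ _ P => axg P
  | .andI _ _ P Q => (axg P).union (axg Q)

/-! ## Inversion and isolation -/

/-- Inversion of a disjunction `D ∨ E` in the conclusion. -/
def inv (D E : NForm α) : Deriv α → Deriv α
  | .ax Γ A C =>
      if A = NForm.or D E then
        match C with
        | .and C1 C2 =>
            .andI C1 C2 (.ax (insert E Γ) D C1) (.ax (insert D Γ) E C2)
        | _ => .ax Γ A C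
      else if C = NForm.or D E then
        match A with
        | .and A1 A2 =>
            .andI A1 A2 (.ax (insert E Γ) A1 D) (.ax (insert D Γ) A2 E)
        | _ => .ax Γ A C
      else
        .ax (insert D (insert E (Γ.erase (NForm.or D E)))) A C
  | .cut A P Q => .cut A (inv D E P) (inv D E Q)
  | .sup P Q => .sup (inv D E P) (inv D E Q)
  | .orI A B P => if A = D ∧ B = E then P else .orI A B (inv D E P)
  | .andI A B P Q => .andI A B (inv D E P) (inv D E Q)

/-- Left inversion of a conjunction `D ∧ E` in the conclusion. -/
def invl (D E : NForm α) : Deriv α → Deriv α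
  | .ax Γ A C =>
      if A = NForm.and D E then
        match C with
        | .or C1 C2 => .orI C1 C2 (.ax (insert C2 Γ) D C1)
        | _ => .ax Γ A C
      else if C = NForm.and D E then
        match A with
        | .or A1 A2 => .orI A1 A2 (.ax (insert A2 Γ) A1 D)
        | _ => .ax Γ A C
      else
        .ax (insert D (Γ.erase (NForm.and D E))) A C
  | .cut A P Q => .cut A (invl D E P) (invl D E Q)
  | .sup P Q => .sup (invl D E P) (invl D E Q)
  | .orI A B P => .orI A B (invl D E P)
  | .andI A B P Q => if A = D ∧ B = E then P else .andI A B (invl D E P) (invl D E Q)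

/-- Right inversion of a conjunction `D ∧ E` in the conclusion. -/
def invr (D E : NForm α) : Deriv α → Deriv α
  | .ax Γ A C =>
      if A = NForm.and D E then
        match C with
        | .or C1 C2 => .orI C1 C2 (.ax (insert C1 Γ) E C2)
        | _ => .ax Γ A C
      else if C = NForm.and D E then
        match A with
        | .or A1 A2 => .orI A1 A2 (.ax (insert A1 Γ) A2 E)
        | _ => .ax Γ A C
      else
        .ax (insert E (Γ.erase (NForm.and D E))) A C
  | .cut A P Q => .cut A (invr D E P) (invr D E Q)
  | .sup P Q => .sup (invr D E P) (invr D E Q)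
  | .orI A B P => .orI A B (invr D E P)
  | .andI A B P Q => if A = D ∧ B = E then Q else .andI A B (invr D E P) (invr D E Q)

/-- Isolation of a non-atomic formula in the conclusion. -/
def isl : NForm α → Deriv α → Deriv α
  | .or A B, P => .orI A B (inv A B P)
  | .and A B, P => .andI A B (invl A B P) (invr A B P)
  | .atom _ _, P => P

/-- Totality of a bl-graph w.r.t. a sharing-free named sequent. -/
def Total (bar : α → α) (G : BLGraph) (Γ : Finset (NForm α)) : Prop :=
  G.verts = snames Γ ∧
  G.Br = BrS Γ ∧
  ∀ x y : ℕ, s(x, y) ∈ G.Edges →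
    ∀ a b : α, HasAtomS Γ x a → HasAtomS Γ y b → a = bar b

/-! ## Atoms and branches -/

theorem HasAtom.mem_names {A : NForm α} {x : ℕ} {a : α} (h : HasAtom A x a) : x ∈ A.names := by
  induction A with
  | atom y b => exact h.1.symm
  | or A B ihA ihB => exact h.imp ihA ihB
  | and A B ihA ihB => exact h.imp ihA ihB

theorem exists_hasAtom {A : NForm α} {x : ℕ} (h : x ∈ A.names) : ∃ a, HasAtom A x a := by
  induction A with
  | atom y b => exact ⟨b, Eq.symm h, rfl⟩
  | or A B ihA ihB =>
    rcases h with h | h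
    · exact (ihA h).imp fun _ => Or.inl
    · exact (ihB h).imp fun _ => Or.inr
  | and A B ihA ihB =>
    rcases h with h | h
    · exact (ihA h).imp fun _ => Or.inl
    · exact (ihB h).imp fun _ => Or.inr

theorem HasAtom.unique {A : NForm α} (hA : A.sharingFree) {x : ℕ} {a b : α}
    (ha : HasAtom A x a) (hb : HasAtom A x b) : a = b := by
  induction A with
  | atom y c => exact ha.2.symm.trans hb.2
  | or A B ihA ihB | and A B ihA ihB =>
    obtain ⟨hA, hB, hd⟩ := hA
    rcases ha with ha | ha <;> rcases hb with hb | hb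
    · exact ihA hA ha hb
    · exact (Set.disjoint_left.1 hd ha.mem_names hb.mem_names).elim
    · exact (Set.disjoint_left.1 hd hb.mem_names ha.mem_names).elim
    · exact ihB hB ha hb

theorem mem_snames {Γ : Finset (NForm α)} {x : ℕ} : x ∈ snames Γ ↔ ∃ A ∈ Γ, x ∈ A.names := by
  simp [snames]

theorem snames_insert (A : NForm α) (Γ : Finset (NForm α)) :
    snames (insert A Γ) = A.names ∪ snames Γ := by
  simp [snames]

theorem names_subset_snames {Γ : Finset (NForm α)} {A : NForm α} (h : A ∈ Γ) :
    A.names ⊆ snames Γ := fun _ hx => mem_snames.2 ⟨A, h, hx⟩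

theorem hasAtomS_insert {A : NForm α} {Γ : Finset (NForm α)} {x : ℕ} {a : α} :
    HasAtomS (insert A Γ) x a ↔ HasAtom A x a ∨ HasAtomS Γ x a := by
  simp [HasAtomS]

theorem HasAtomS.unique {Γ : Finset (NForm α)} (hΓ : SFSet Γ) {x : ℕ} {a b : α}
    (ha : HasAtomS Γ x a) (hb : HasAtomS Γ x b) : a = b := by
  obtain ⟨A, hA, ha⟩ := ha
  obtain ⟨B, hB, hb⟩ := hb
  by_cases h : A = B
  · subst h
    exact ha.unique (hΓ.1 A hA) hb
  · exact (Set.disjoint_left.1 (hΓ.2 A hA B hB h) ha.mem_names hb.mem_names).elim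

theorem SFSet.insert {A : NForm α} {Γ : Finset (NForm α)} (hΓ : SFSet Γ) (hA : A.sharingFree)
    (hd : Disjoint A.names (snames Γ)) : SFSet (insert A Γ) := by
  constructor
  · intro B hB
    rcases Finset.mem_insert.1 hB with rfl | hB
    exacts [hA, hΓ.1 B hB]
  · intro B hB C hC hBC
    rcases Finset.mem_insert.1 hB with rfl | hB <;> rcases Finset.mem_insert.1 hC with rfl | hC
    · exact (hBC rfl).elim
    · exact hd.mono_right (names_subset_snames (by assumption))
    · exact (hd.mono_right (names_subset_snames (by assumption))).symm
    · exact hΓ.2 B hB C hC hBC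

theorem names_negF (bar : α → α) (A : NForm α) : (negF bar A).names = A.names := by
  induction A with
  | atom x a => rfl
  | or A B ihA ihB | and A B ihA ihB => simp [negF, NForm.names, ihA, ihB]

theorem sharingFree_negF (bar : α → α) {A : NForm α} (hA : A.sharingFree) :
    (negF bar A).sharingFree := by
  induction A with
  | atom x a => trivial
  | or A B ihA ihB | and A B ihA ihB =>
    refine ⟨ihA hA.1, ihB hA.2.1, ?_⟩
    rw [names_negF, names_negF]
    exact hA.2.2

theorem HasAtom.negF {bar : α → α} {A : NForm α} {x : ℕ} {a : α} (h : HasAtom A x a) :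
    HasAtom (negF bar A) x (bar a) := by
  induction A with
  | atom y b => exact ⟨h.1, congrArg bar h.2⟩
  | or A B ihA ihB => exact h.imp ihA ihB
  | and A B ihA ihB => exact h.imp ihA ihB

theorem subset_names_of_mem_BrF {A : NForm α} {X : Set ℕ} (h : X ∈ BrF A) : X ⊆ A.names := by
  induction A generalizing X with
  | atom x a => exact (Set.mem_singleton_iff.1 h).subset
  | or A B ihA ihB =>
    obtain ⟨Y, hY, Z, hZ, rfl⟩ := h
    exact Set.union_subset_union (ihA hY) (ihB hZ)
  | and A B ihA ihB =>
    rcases h with h | h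
    · exact (ihA h).trans Set.subset_union_left
    · exact (ihB h).trans Set.subset_union_right

/-- For every set `T` of names, either some branch of `A` avoids `T`, or some branch of the
negation of `A` is included in `T`. -/
theorem branch_dichotomy (bar : α → α) (A : NForm α) (T : Set ℕ) :
    (∃ X ∈ BrF A, Disjoint X T) ∨ ∃ X ∈ BrF (negF bar A), X ⊆ T := by
  induction A with
  | atom x a =>
    by_cases h : x ∈ T
    · exact Or.inr ⟨{x}, rfl, Set.singleton_subset_iff.2 h⟩
    · exact Or.inl ⟨{x}, rfl, Set.disjoint_singleton_left.2 h⟩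
  | or A B ihA ihB =>
    rcases ihA with ⟨X, hX, hXT⟩ | ⟨X, hX, hXT⟩
    · rcases ihB with ⟨Y, hY, hYT⟩ | ⟨Y, hY, hYT⟩
      · exact Or.inl ⟨X ∪ Y, ⟨X, hX, Y, hY, rfl⟩, hXT.union_left hYT⟩
      · exact Or.inr ⟨Y, Or.inr hY, hYT⟩
    · exact Or.inr ⟨X, Or.inl hX, hXT⟩
  | and A B ihA ihB =>
    rcases ihA with ⟨X, hX, hXT⟩ | ⟨X, hX, hXT⟩
    · exact Or.inl ⟨X, Or.inl hX, hXT⟩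
    · rcases ihB with ⟨Y, hY, hYT⟩ | ⟨Y, hY, hYT⟩
      · exact Or.inl ⟨Y, Or.inr hY, hYT⟩
      · exact Or.inr ⟨X ∪ Y, ⟨X, hX, Y, hY, rfl⟩, Set.union_subset hXT hYT⟩

theorem mem_BrS_insert {A : NForm α} {Γ : Finset (NForm α)} {X : Set ℕ} :
    X ∈ BrS (insert A Γ) ↔
      X ⊆ A.names ∪ snames Γ ∧ X ∩ A.names ∈ BrF A ∧ ∀ B ∈ Γ, X ∩ B.names ∈ BrF B := by
  simp [BrS, snames_insert]

theorem inter_mem_BrF_or {A B : NForm α} (hd : Disjoint A.names B.names) {X : Set ℕ} :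
    X ∩ (NForm.or A B).names ∈ BrF (NForm.or A B) ↔
      X ∩ A.names ∈ BrF A ∧ X ∩ B.names ∈ BrF B := by
  rw [Set.disjoint_left] at hd
  simp only [NForm.names]
  constructor
  · rintro ⟨Y, hY, Z, hZ, h⟩
    have hYA := subset_names_of_mem_BrF hY
    have hZB := subset_names_of_mem_BrF hZ
    simp only [Set.ext_iff, Set.mem_inter_iff, Set.mem_union] at h
    have h1 : X ∩ A.names = Y := by
      ext x; have := h x; have := @hYA x; have := @hZB x; have := @hd x
      simp only [Set.mem_inter_iff]; tauto
    have h2 : X ∩ B.names = Z := by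
      ext x; have := h x; have := @hYA x; have := @hZB x; have := @hd x
      simp only [Set.mem_inter_iff]; tauto
    exact ⟨h1 ▸ hY, h2 ▸ hZ⟩
  · rintro ⟨hA, hB⟩
    exact ⟨_, hA, _, hB, Set.inter_union_distrib_left ..⟩

theorem BrS_insert_or {A B : NForm α} {Γ : Finset (NForm α)} (hd : Disjoint A.names B.names) :
    BrS (insert (NForm.or A B) Γ) = BrS (insert A (insert B Γ)) := by
  ext X
  simp only [mem_BrS_insert, inter_mem_BrF_or hd, snames_insert, Finset.forall_mem_insert,
    and_assoc]
  rw [NForm.names, Set.union_assoc]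

theorem BrS_insert_and_comm (A B : NForm α) (Γ : Finset (NForm α)) :
    BrS (insert (NForm.and A B) Γ) = BrS (insert (NForm.and B A) Γ) := by
  ext X
  simp only [mem_BrS_insert, NForm.names, BrF, Set.union_comm B.names, Set.union_comm (BrF B)]

theorem BrS_insert_subset_and {A B : NForm α} {Γ : Finset (NForm α)}
    (hd : Disjoint A.names B.names) (hB : Disjoint B.names (snames Γ)) :
    BrS (insert A Γ) ⊆ BrS (insert (NForm.and A B) Γ) := by
  intro X hX
  rw [mem_BrS_insert] at hX ⊢
  obtain ⟨hs, hXA, hΓ⟩ := hX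
  refine ⟨hs.trans (Set.union_subset_union_left _ Set.subset_union_left), Or.inl ?_, hΓ⟩
  have : X ∩ (A.names ∪ B.names) = X ∩ A.names := by
    ext x
    have := @hs x
    have : x ∈ A.names → x ∉ B.names := fun h => Set.disjoint_left.1 hd h
    have : x ∈ B.names → x ∉ snames Γ := fun h => Set.disjoint_left.1 hB h
    simp only [Set.mem_inter_iff, Set.mem_union] at *
    tauto
  simpa only [NForm.names, this] using hXA

theorem BrS_insert_and {A B : NForm α} {Γ : Finset (NForm α)} (hd : Disjoint A.names B.names)
    (hA : Disjoint A.names (snames Γ)) (hB : Disjoint B.names (snames Γ)) :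
    BrS (insert (NForm.and A B) Γ) = BrS (insert A Γ) ∪ BrS (insert B Γ) := by
  have key : ∀ {C D : NForm α} {X : Set ℕ}, X ∈ BrS (insert (NForm.and C D) Γ) →
      Disjoint C.names D.names → X ∩ (C.names ∪ D.names) ∈ BrF C → X ∈ BrS (insert C Γ) := by
    intro C D X hX hCD hC
    rw [mem_BrS_insert] at hX ⊢
    have hsub := subset_names_of_mem_BrF hC
    have heq : X ∩ (C.names ∪ D.names) = X ∩ C.names := by
      ext x
      have := @hsub x
      simp only [Set.mem_inter_iff, Set.mem_union] at *
      tauto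
    refine ⟨fun x hx => ?_, heq ▸ hC, hX.2.2⟩
    rcases hX.1 hx with h | h
    · exact Or.inl (hsub ⟨hx, h⟩)
    · exact Or.inr h
  apply Set.Subset.antisymm
  · intro X hX
    rcases (mem_BrS_insert.1 hX).2.1 with h | h
    · exact Or.inl (key hX hd h)
    · rw [BrS_insert_and_comm] at hX
      rw [NForm.names, Set.union_comm] at h
      exact Or.inr (key hX hd.symm h)
  · refine Set.union_subset (BrS_insert_subset_and hd hB) ?_
    rw [BrS_insert_and_comm]
    exact BrS_insert_subset_and hd.symm hA

/-! ## Totality of the axiom graphs of cut-free derivations -/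

/-- The branch labels of `G` are exactly the members of `Brs`, and its edges join names of dual
atoms, `At` being the relation between names and atoms. -/
structure DualCover (bar : α → α) (G : BLGraph) (Brs : Set (Set ℕ)) (At : ℕ → α → Prop) :
    Prop where
  br_eq : G.Br = Brs
  dual : ∀ e X, G.rel e X →
    ∃ x y a, e = s(x, y) ∧ x ∈ X ∧ y ∈ X ∧ At x a ∧ At y (bar a)

theorem BLGraph.Br_union (G H : BLGraph) : (G.union H).Br = G.Br ∪ H.Br := by
  ext X
  exact exists_or

theorem BLGraph.Br_blwk (V : Set ℕ) (Brs : Set (Set ℕ)) (G : BLGraph) :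
    (blwk V Brs G).Br = Set.image2 (· ∪ ·) G.Br Brs := by
  ext X
  constructor
  · rintro ⟨e, Y, Z, hY, hZ, rfl⟩
    exact ⟨Y, ⟨e, hY⟩, Z, hZ, rfl⟩
  · rintro ⟨Y, ⟨e, hY⟩, Z, hZ, rfl⟩
    exact ⟨e, Y, Z, hY, hZ, rfl⟩

theorem DualCover.union {bar : α → α} {G H : BLGraph} {B C D : Set (Set ℕ)}
    {At At' At'' : ℕ → α → Prop} (hG : DualCover bar G B At) (hH : DualCover bar H C At')
    (hD : B ∪ C = D) (h : ∀ x a, At x a → At'' x a) (h' : ∀ x a, At' x a → At'' x a) :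
    DualCover bar (G.union H) D At'' := by
  refine ⟨by rw [BLGraph.Br_union, hG.br_eq, hH.br_eq, hD], ?_⟩
  rintro e X (hr | hr)
  · obtain ⟨x, y, a, he, hx, hy, hxa, hya⟩ := hG.dual e X hr
    exact ⟨x, y, a, he, hx, hy, h _ _ hxa, h _ _ hya⟩
  · obtain ⟨x, y, a, he, hx, hy, hxa, hya⟩ := hH.dual e X hr
    exact ⟨x, y, a, he, hx, hy, h' _ _ hxa, h' _ _ hya⟩

theorem DualCover.blwk {bar : α → α} {G : BLGraph} {B C D : Set (Set ℕ)}
    {At At' : ℕ → α → Prop} (hG : DualCover bar G B At) (V : Set ℕ)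
    (hD : Set.image2 (· ∪ ·) B C = D) (h : ∀ x a, At x a → At' x a) :
    DualCover bar (blwk V C G) D At' := by
  refine ⟨by rw [BLGraph.Br_blwk, hG.br_eq, hD], ?_⟩
  rintro e X ⟨Y, Z, hY, hZ, rfl⟩
  obtain ⟨x, y, a, he, hx, hy, hxa, hya⟩ := hG.dual e Y hY
  exact ⟨x, y, a, he, Or.inl hx, Or.inl hy, h _ _ hxa, h _ _ hya⟩

theorem image2_union_BrF_or (A B : NForm α) :
    Set.image2 (· ∪ ·) (BrF A) (BrF B) = BrF (NForm.or A B) := by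
  ext X
  simp only [Set.mem_image2, BrF, Set.mem_ofPred_eq, eq_comm]

theorem dualCover_blid {bar : α → α} (hbar : Function.Involutive bar) (A C : NForm α)
    (h : A.shape = (negF bar C).shape) :
    DualCover bar (blid A C) (Set.image2 (· ∪ ·) (BrF A) (BrF C))
      (fun x a => HasAtom A x a ∨ HasAtom C x a) := by
  induction A generalizing C with
  | atom x a =>
    cases C with
    | atom y b =>
      obtain rfl : a = bar b := by simpa [NForm.shape, negF] using h
      refine ⟨?_, ?_⟩
      · ext X
        simp only [BLGraph.Br, blid, BrF, Set.image2_singleton, Set.singleton_union,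
          Set.mem_ofPred_eq, exists_eq_left, Set.mem_singleton_iff]
      · rintro e X ⟨rfl, rfl⟩
        exact ⟨x, y, bar b, rfl, by simp, by simp, Or.inl ⟨rfl, rfl⟩,
          Or.inr ⟨rfl, (hbar b).symm⟩⟩
    | or C1 C2 => simp [NForm.shape, negF] at h
    | and C1 C2 => simp [NForm.shape, negF] at h
  | or A1 A2 ih1 ih2 =>
    cases C with
    | atom y b => simp [NForm.shape, negF] at h
    | or C1 C2 => simp [NForm.shape, negF] at h
    | and C1 C2 =>
      simp only [NForm.shape, negF, Shape.or.injEq] at h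
      refine DualCover.union ((ih1 C1 h.1).blwk _ rfl fun _ _ => id)
        ((ih2 C2 h.2).blwk _ rfl fun _ _ => id) ?_ ?_ ?_
      · rw [← image2_union_BrF_or, BrF, Set.image2_union_right,
          Set.image2_right_comm Set.union_right_comm,
          Set.image2_right_comm Set.union_right_comm (s := BrF A2),
          Set.image2_comm Set.union_comm (s := BrF A2)]
      · simp only [HasAtom]; tauto
      · simp only [HasAtom]; tauto
  | and A1 A2 ih1 ih2 =>
    cases C with
    | atom y b => simp [NForm.shape, negF] at h
    | and C1 C2 => simp [NForm.shape, negF] at h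
    | or C1 C2 =>
      simp only [NForm.shape, negF, Shape.and.injEq] at h
      refine DualCover.union ((ih1 C1 h.1).blwk _ rfl fun _ _ => id)
        ((ih2 C2 h.2).blwk _ rfl fun _ _ => id) ?_ ?_ ?_
      · rw [← image2_union_BrF_or, BrF, Set.image2_union_left,
          Set.image2_assoc Set.union_assoc, Set.image2_assoc Set.union_assoc,
          Set.image2_comm Set.union_comm (s := BrF C2)]
      · simp only [HasAtom]; tauto
      · simp only [HasAtom]; tauto

theorem image2_union_BrF_BrS {A : NForm α} {Γ : Finset (NForm α)}
    (hd : Disjoint A.names (snames Γ)) :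
    Set.image2 (· ∪ ·) (BrF A) (BrS Γ) = BrS (insert A Γ) := by
  ext X
  rw [mem_BrS_insert]
  constructor
  · rintro ⟨Y, hY, Z, ⟨hZs, hZ⟩, rfl⟩
    have hYA := subset_names_of_mem_BrF hY
    refine ⟨Set.union_subset_union hYA hZs, ?_, fun B hB => ?_⟩
    · rwa [Set.union_inter_distrib_right, (hd.mono_right hZs).symm.inter_eq, Set.union_empty,
        Set.inter_eq_left.2 hYA]
    · rw [Set.union_inter_distrib_right,
        (hd.mono hYA (names_subset_snames hB)).inter_eq, Set.empty_union]
      exact hZ B hB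
  · rintro ⟨hs, hA, hΓ⟩
    refine ⟨_, hA, X ∩ snames Γ, ⟨Set.inter_subset_right, fun B hB => ?_⟩, ?_⟩
    · rw [Set.inter_assoc, Set.inter_eq_right.2 (names_subset_snames hB)]
      exact hΓ B hB
    · simp only
      rw [← Set.inter_union_distrib_left, Set.inter_eq_left.2 hs]

theorem dualCover_blaxg {bar : α → α} (hbar : Function.Involutive bar) {P : Deriv α}
    (hP : WF bar P) (hcf : CutFree P) :
    DualCover bar (blaxg P) (BrS (concl P)) (HasAtomS (concl P)) := by
  induction P with
  | ax Γ A C =>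
    obtain ⟨hs, -, -, -, hAC, hA, hC⟩ := hP
    refine (dualCover_blid hbar A C hs).blwk _ ?_ ?_
    · rw [Set.image2_assoc Set.union_assoc, image2_union_BrF_BrS hC, image2_union_BrF_BrS]
      · rfl
      · rw [snames_insert]
        exact hAC.union_right hA
    · intro x a
      simp only [concl, hasAtomS_insert]
      tauto
  | cut A P Q => exact hcf.elim
  | sup P Q ihP ihQ =>
    obtain ⟨hP, hQ, hPQ⟩ := hP
    have hcQ := ihQ hQ hcf.2
    rw [← hPQ] at hcQ
    exact (ihP hP hcf.1).union hcQ (Set.union_self _) (fun _ _ => id) (fun _ _ => id)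
  | orI A B P ih =>
    obtain ⟨hP, Γ, hAΓ, hBΓ, hAB, hc, -, -, -, hd, -, -⟩ := hP
    have hcl : concl (.orI A B P) = insert (NForm.or A B) Γ := by
      rw [concl, hc, Finset.erase_insert (by simp [hAB, hAΓ]), Finset.erase_insert hBΓ]
    have := ih hP hcf
    rw [hc] at this
    rw [hcl, BrS_insert_or hd]
    refine ⟨this.br_eq, fun e X hr => ?_⟩
    obtain ⟨x, y, a, he, hx, hy, hxa, hya⟩ := this.dual e X hr
    refine ⟨x, y, a, he, hx, hy, ?_, ?_⟩
    · simpa only [hasAtomS_insert, HasAtom, or_assoc] using hxa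
    · simpa only [hasAtomS_insert, HasAtom, or_assoc] using hya
  | andI A B P Q ihP ihQ =>
    obtain ⟨hP, hQ, Γ, hAΓ, hBΓ, hcP, hcQ, -, -, -, hd, hdA, hdB⟩ := hP
    have hcl : concl (.andI A B P Q) = insert (NForm.and A B) Γ := by
      rw [concl, hcP, Finset.erase_insert hAΓ]
    have h1 := ihP hP hcf.1
    have h2 := ihQ hQ hcf.2
    rw [hcP] at h1
    rw [hcQ] at h2
    rw [hcl]
    refine h1.union h2 (BrS_insert_and hd hdA hdB).symm ?_ ?_
    · simp only [hasAtomS_insert, HasAtom]; tauto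
    · simp only [hasAtomS_insert, HasAtom]; tauto

/-! ## Atomic contexts -/

theorem union_snames_mem_BrS {A : NForm α} {Γ : Finset (NForm α)} (hatomic : ∀ F ∈ Γ, F.isAtom)
    (hd : Disjoint A.names (snames Γ)) {X : Set ℕ} (hX : X ∈ BrF A) :
    X ∪ snames Γ ∈ BrS (insert A Γ) := by
  rw [← image2_union_BrF_BrS hd]
  refine ⟨X, hX, snames Γ, ⟨subset_rfl, fun F hF => ?_⟩, rfl⟩
  rw [Set.inter_eq_right.2 (names_subset_snames hF)]
  cases F with
  | atom x a => rfl
  | or B C => exact (hatomic _ hF).elim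
  | and B C => exact (hatomic _ hF).elim

theorem union_snames_diff {A : NForm α} {Γ : Finset (NForm α)}
    (hd : Disjoint A.names (snames Γ)) {X : Set ℕ} (hX : X ∈ BrF A) :
    (X ∪ snames Γ) \ A.names = snames Γ := by
  rw [Set.union_sdiff_distrib, Set.sdiff_eq_empty.2 (subset_names_of_mem_BrF hX), Set.empty_union,
    hd.symm.sdiff_eq_left]

/-! ## Polarities -/

/-- A fixpoint-free involution admits a two-valued valuation compatible with it. -/
theorem exists_valuation {bar : α → α} (hbar : Function.Involutive bar) (hfix : ∀ a, bar a ≠ a) :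
    ∃ v : α → Prop, ∀ a, v (bar a) ↔ ¬ v a := by
  refine ⟨fun a => WellOrderingRel a (bar a), fun a => ?_⟩
  simp only [hbar a]
  exact ⟨fun h h' => asymm_of WellOrderingRel h h', fun h =>
    ((trichotomous_of WellOrderingRel a (bar a)).resolve_left h).resolve_left (hfix a).symm⟩

/-- The name `x` carries in `Γ` an atom validated by `v`. -/
def Positive (v : α → Prop) (Γ : Finset (NForm α)) (x : ℕ) : Prop := ∃ a, HasAtomS Γ x a ∧ v a

theorem HasAtomS.positive_iff {v : α → Prop} {Γ : Finset (NForm α)} (hΓ : SFSet Γ) {x : ℕ} {a : α}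
    (h : HasAtomS Γ x a) : Positive v Γ x ↔ v a :=
  ⟨fun ⟨_, hb, hv⟩ => h.unique hΓ hb ▸ hv, fun hv => ⟨a, h, hv⟩⟩

theorem positive_insert_negF {bar : α → α} {v : α → Prop} (hv : ∀ a, v (bar a) ↔ ¬ v a)
    {A : NForm α} {Γ : Finset (NForm α)} (hΓ : SFSet (insert A Γ))
    (hΓ' : SFSet (insert (negF bar A) Γ)) {x : ℕ} (hx : x ∈ A.names) :
    Positive v (insert (negF bar A) Γ) x ↔ ¬ Positive v (insert A Γ) x := by
  obtain ⟨a, ha⟩ := exists_hasAtom hx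
  rw [(hasAtomS_insert.2 (Or.inl ha)).positive_iff hΓ,
    (hasAtomS_insert.2 (Or.inl (ha.negF (bar := bar)))).positive_iff hΓ', hv]

theorem positive_insert_of_mem {v : α → Prop} {A : NForm α} {Γ : Finset (NForm α)}
    (hd : Disjoint A.names (snames Γ)) {x : ℕ} (hx : x ∈ snames Γ) :
    Positive v (insert A Γ) x ↔ Positive v Γ x := by
  have : ∀ a, ¬ HasAtom A x a := fun a ha => Set.disjoint_left.1 hd ha.mem_names hx
  simp [Positive, hasAtomS_insert, this]

/-- Every branch contains an edge, oriented from a negative to a positive name. -/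
theorem exists_oriented_edge {bar : α → α} (hbar : Function.Involutive bar) {v : α → Prop}
    (hv : ∀ a, v (bar a) ↔ ¬ v a) {A : NForm α} {Γ : Finset (NForm α)}
    (hatomic : ∀ F ∈ Γ, F.isAtom) (hd : Disjoint A.names (snames Γ)) (hΓ : SFSet (insert A Γ))
    {P : Deriv α} (hP : WF bar P) (hcf : CutFree P) (hc : concl P = insert A Γ) {X : Set ℕ}
    (hX : X ∈ BrF A) :
    ∃ x ∈ X ∪ snames Γ, ∃ y ∈ X ∪ snames Γ, (blaxg P).relI A.names s(x, y) (snames Γ) ∧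
      ¬ Positive v (insert A Γ) x ∧ Positive v (insert A Γ) y := by
  have hcov := dualCover_blaxg hbar hP hcf
  rw [hc] at hcov
  obtain ⟨e, he⟩ : X ∪ snames Γ ∈ (blaxg P).Br :=
    hcov.br_eq ▸ union_snames_mem_BrS hatomic hd hX
  have hrel : (blaxg P).relI A.names e (snames Γ) := ⟨_, he, (union_snames_diff hd hX).symm⟩
  obtain ⟨x, y, a, rfl, hx, hy, hxa, hya⟩ := hcov.dual e _ he
  have hpx := hxa.positive_iff (v := v) hΓ
  have hpy := hya.positive_iff (v := v) hΓ
  have hva := hv a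
  by_cases h : v a
  · exact ⟨y, hy, x, hx, Sym2.eq_swap ▸ hrel, by tauto, by tauto⟩
  · exact ⟨x, hx, y, hy, hrel, by tauto, by tauto⟩

/-! ## Alternating paths from oriented edges -/

/-- Reachability in a directed graph is witnessed by sequences of pairwise distinct vertices. -/
theorem exists_injective_path {V : Type*} {D : V → V → Prop} {s t : V}
    (h : Relation.ReflTransGen D s t) :
    ∃ (n : ℕ) (z : ℕ → V), z 0 = s ∧ z n = t ∧ (∀ i < n, D (z i) (z (i + 1))) ∧
      ∀ i ≤ n, ∀ j ≤ n, z i = z j → i = j := by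
  have hex : ∃ (n : ℕ) (z : ℕ → V), z 0 = s ∧ z n = t ∧ ∀ i < n, D (z i) (z (i + 1)) := by
    induction h with
    | refl => exact ⟨0, fun _ => s, rfl, rfl, by simp⟩
    | @tail b c _ hbc ih =>
      obtain ⟨n, z, h0, hn, hD⟩ := ih
      refine ⟨n + 1, fun k => if k ≤ n then z k else c, by simpa using h0, by simp,
        fun i hi => ?_⟩
      rcases Nat.lt_succ_iff_lt_or_eq.1 hi with h | rfl
      · simpa [h.le, Nat.succ_le_of_lt h] using hD i h
      · simpa [hn] using hbc
  obtain ⟨z, h0, hn, hD⟩ := Nat.find_spec hex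
  set n := Nat.find hex with hndef
  have hlt : ∀ i j, i < j → j ≤ n → z i ≠ z j := by
    intro i j hij hj hz
    refine Nat.find_min hex (m := n - (j - i)) (by omega)
      ⟨fun k => if k ≤ i then z k else z (k + (j - i)), by simpa using h0, ?_, fun k hk => ?_⟩
    · simp only
      by_cases hjn : j = n
      · subst hjn
        rw [if_pos (by omega), show n - (n - i) = i by omega, hz, hn]
      · rw [if_neg (by omega), show n - (j - i) + (j - i) = n by omega, hn]
    · rcases lt_trichotomy k i with h | rfl | h
      · simpa [h.le, Nat.succ_le_of_lt h] using hD k (by omega)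
      · have := hD j (by omega)
        simp only [le_refl, if_true, if_neg (show ¬ k + 1 ≤ k by omega)]
        rw [hz, show k + 1 + (j - k) = j + 1 by omega]
        exact this
      · simp only [if_neg (show ¬ k ≤ i by omega), if_neg (show ¬ k + 1 ≤ i by omega)]
        rw [show k + 1 + (j - i) = k + (j - i) + 1 by omega]
        exact hD _ (by omega)
  refine ⟨n, z, h0, hn, hD, fun i hi j hj hz => ?_⟩
  rcases lt_trichotomy i j with h | h | h
  · exact (hlt i j h hj hz).elim
  · exact h
  · exact (hlt j i h hi hz.symm).elim

/-- Polarities `p`, `q` on the vertices of `G`, `H` that disagree on the interface and agree on the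
context orient the edges of `G` and `H` so that directed paths alternate. If for each subset `T` of
the interface there is an oriented `G`-edge outside `T` or an oriented `H`-edge within `T`
(endpoints in the context being always allowed), then some such path is complete. -/
theorem comp_edges_nonempty {G H : BLGraph} {I S : Set ℕ} (hd : Disjoint I S) {p q : ℕ → Prop}
    (hI : ∀ x ∈ I, (q x ↔ ¬ p x)) (hS : ∀ x ∈ S, (q x ↔ p x))
    (hT : ∀ T ⊆ I,
      (∃ x ∈ I \ T ∪ S, ∃ y ∈ I \ T ∪ S, G.relI I s(x, y) S ∧ ¬ p x ∧ p y) ∨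
      ∃ x ∈ T ∪ S, ∃ y ∈ T ∪ S, H.relI I s(x, y) S ∧ ¬ q x ∧ q y) :
    (G.comp H I).Edges.Nonempty := by
  let gE : ℕ → ℕ → Prop := fun x y => G.relI I s(x, y) S ∧ ¬ p x ∧ p y
  let hE : ℕ → ℕ → Prop := fun x y => H.relI I s(x, y) S ∧ ¬ q x ∧ q y
  let D : ℕ → ℕ → Prop := fun x y => x ∈ I ∪ S ∧ y ∈ I ∪ S ∧ (gE x y ∨ hE x y)
  obtain ⟨s, hs, hps, t, ht, hpt, hst⟩ :
      ∃ s ∈ S, ¬ p s ∧ ∃ t ∈ S, p t ∧ Relation.ReflTransGen D s t := by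
    by_contra! hno
    let R : Set ℕ := {x | ∃ s ∈ S, ¬ p s ∧ Relation.ReflTransGen D s x}
    have hstep : ∀ x y, x ∈ R → D x y → y ∈ R := fun x y ⟨s, hs, hp, h⟩ hxy =>
      ⟨s, hs, hp, h.tail hxy⟩
    have hsrc : ∀ x ∈ S, ¬ p x → x ∈ R := fun x hx hp => ⟨x, hx, hp, .refl⟩
    have htgt : ∀ x ∈ S, p x → x ∉ R := fun x hx hp ⟨s, hs, hps, h⟩ => hno s hs hps x hx hp h
    rcases hT {x ∈ I | x ∈ R ↔ p x} (Set.sep_subset _ _) with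
      ⟨x, hx, y, hy, hxy, hpx, hpy⟩ | ⟨x, hx, y, hy, hxy, hqx, hqy⟩
    · have hxR : x ∈ R := by
        rcases hx with ⟨hxI, hxT⟩ | hx
        · by_contra hxR
          exact hxT ⟨hxI, by tauto⟩
        · exact hsrc x hx hpx
      have hyR : y ∈ R := hstep x y hxR
        ⟨hx.imp_left And.left, hy.imp_left And.left, Or.inl ⟨hxy, hpx, hpy⟩⟩
      rcases hy with ⟨hyI, hyT⟩ | hy
      · exact hyT ⟨hyI, by tauto⟩
      · exact htgt y hy hpy hyR
    · have hxR : x ∈ R := by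
        rcases hx with ⟨hxI, hxT⟩ | hx
        · have := hI x hxI
          tauto
        · exact hsrc x hx (by have := hS x hx; tauto)
      have hyR : y ∈ R := hstep x y hxR
        ⟨hx.imp_left And.left, hy.imp_left And.left, Or.inr ⟨hxy, hqx, hqy⟩⟩
      rcases hy with ⟨hyI, hyT⟩ | hy
      · have := hI y hyI
        tauto
      · exact htgt y hy ((hS y hy).1 hqy) hyR
  obtain ⟨n, z, rfl, rfl, hD, hinj⟩ := exists_injective_path hst
  have hn : 0 < n := by
    rcases Nat.eq_zero_or_pos n with rfl | h
    · exact (hps hpt).elim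
    · exact h
  have hmid : ∀ i, i + 1 < n → z (i + 1) ∈ I := by
    intro i hi
    obtain ⟨-, hmem, hin⟩ := hD i (by omega)
    obtain ⟨-, -, hout⟩ := hD (i + 1) hi
    refine hmem.resolve_right fun h => ?_
    have := hS _ h
    simp only [gE, hE] at hin hout
    tauto
  have hGH : ∀ i, i + 1 < n → gE (z i) (z (i + 1)) → hE (z (i + 1)) (z (i + 2)) :=
    fun i hi h => (hD (i + 1) hi).2.2.resolve_left fun h' => h'.2.1 h.2.2
  have hHG : ∀ i, i + 1 < n → hE (z i) (z (i + 1)) → gE (z (i + 1)) (z (i + 2)) :=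
    fun i hi h => (hD (i + 1) hi).2.2.resolve_right fun h' => h'.2.1 h.2.2
  have halt : ∀ g h : ℕ → ℕ → Prop,
      (∀ i, i + 1 < n → g (z i) (z (i + 1)) → h (z (i + 1)) (z (i + 2))) →
      (∀ i, i + 1 < n → h (z i) (z (i + 1)) → g (z (i + 1)) (z (i + 2))) →
      g (z 0) (z 1) → ∀ i, i + 1 < n + 1 →
        (Even i → g (z i) (z (i + 1))) ∧ (¬ Even i → h (z i) (z (i + 1))) := by
    intro g h hgh hhg h0 i
    induction i with
    | zero => exact fun _ => ⟨fun _ => h0, fun h => (h Even.zero).elim⟩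
    | succ i ih =>
      intro hi
      have ih := ih (by omega)
      refine ⟨fun he => hhg i (by omega) (ih.2 ?_), fun he => hgh i (by omega) (ih.1 ?_)⟩
      · exact Nat.even_add_one.1 he
      · exact not_not.1 (mt Nat.even_add_one.2 he)
  refine ⟨s(z 0, z n), S, n + 1, z, ⟨by omega, ?_, ?_, ?_⟩, Set.disjoint_right.1 hd hs,
    Set.disjoint_right.1 hd ht, rfl⟩
  · exact fun i hi j hj => hinj i (by omega) j (by omega)
  · intro i hi hin
    obtain ⟨k, rfl⟩ := Nat.exists_eq_succ_of_ne_zero hi.ne'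
    exact hmid k (by omega)
  · rcases (hD 0 hn).2.2 with h | h
    · exact Or.inl fun i hi => (halt gE hE hGH hHG h i hi).imp
        (fun f he => (f he).1) (fun f he => (f he).1)
    · exact Or.inr fun i hi => (halt hE gE hHG hGH h i hi).imp
        (fun f he => (f he).1) (fun f he => (f he).1)

end GS4
/-- Semantic cut-admissibility: the composite of the bl-axiom
graphs of two cut-free derivations over an atomic context has an edge. -/
theorem GS4.semantic_cut_admissibility {α : Type} (bar : α → α)
    (hbar : Function.Involutive bar) (hfix : ∀ a, bar a ≠ a)
    (Γ : Finset (GS4.NForm α)) (A : GS4.NForm α)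
    (hΓ : GS4.SFSet Γ) (hatomic : ∀ F ∈ Γ, F.isAtom)
    (hA : A.sharingFree) (hd : Disjoint A.names (GS4.snames Γ))
    (hAΓ : A ∉ Γ) (hAΓ' : GS4.negF bar A ∉ Γ)
    (P Q : GS4.Deriv α) (hP : GS4.WF bar P) (hQ : GS4.WF bar Q)
    (hcfP : GS4.CutFree P) (hcfQ : GS4.CutFree Q)
    (hcP : GS4.concl P = insert A Γ)
    (hcQ : GS4.concl Q = insert (GS4.negF bar A) Γ) :
    ((GS4.blaxg P).comp (GS4.blaxg Q) A.names).Edges.Nonempty := by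
  obtain ⟨v, hv⟩ := GS4.exists_valuation hbar hfix
  have hd' : Disjoint (GS4.negF bar A).names (GS4.snames Γ) := by rwa [GS4.names_negF]
  have hsf := hΓ.insert hA hd
  have hsf' := hΓ.insert (GS4.sharingFree_negF bar hA) hd'
  refine GS4.comp_edges_nonempty hd (p := GS4.Positive v (insert A Γ))
    (q := GS4.Positive v (insert (GS4.negF bar A) Γ))
    (fun x hx => GS4.positive_insert_negF hv hsf hsf' hx)
    (fun x hx => (GS4.positive_insert_of_mem hd' hx).trans
      (GS4.positive_insert_of_mem hd hx).symm) fun T _ => ?_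
  rcases GS4.branch_dichotomy bar A T with ⟨X, hX, hXT⟩ | ⟨X, hX, hXT⟩
  · obtain ⟨x, hx, y, hy, h⟩ := GS4.exists_oriented_edge hbar hv hatomic hd hsf hP hcfP hcP hX
    have hsub : X ∪ GS4.snames Γ ⊆ A.names \ T ∪ GS4.snames Γ :=
      Set.union_subset_union_left _
        (Set.subset_sdiff.2 ⟨GS4.subset_names_of_mem_BrF hX, hXT⟩)
    exact Or.inl ⟨x, hsub hx, y, hsub hy, h⟩
  · obtain ⟨x, hx, y, hy, h⟩ := GS4.exists_oriented_edge hbar hv hatomic hd' hsf' hQ hcfQ hcQ hX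
    have hsub : X ∪ GS4.snames Γ ⊆ T ∪ GS4.snames Γ := Set.union_subset_union_left _ hXT
    rw [GS4.names_negF] at h
    exact Or.inr ⟨x, hsub hx, y, hsub hy, h⟩
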